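/- Let B ⊂ ℍ be nonempty and suppose there exists α > 1 such that the set B \ {x ∈ ℍ : x₂ ≤ |x₁|^{1/α}} is finite. Then there exists some x ∈ B with H_B(x) > 0. -/

import Mathlib

open Filter

namespace SHM

/-- The upper half planar lattice `ℍ = {(x₁,x₂) ∈ ℤ² : x₂ ≥ 0}` (including the x-axis). -/
def upperH : Set (ℤ × ℤ) := {p | 0 ≤ p.2}

/-- The horizontal line `L_n = {(x,n) : x ∈ ℤ}` of height `n`. -/
def lineH (n : ℤ) : Set (ℤ × ℤ) := {p | p.2 = n}

/-- The four unit steps of the planar simple random walk. -/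
def dirs : Finset (ℤ × ℤ) := {(1,0), (-1,0), (0,1), (0,-1)}

/-- The position after `m` steps of the walk started at `z` whose first `n`
increments are given by `σ`. -/
def pos (z : ℤ × ℤ) {n : ℕ} (σ : Fin n → ℤ × ℤ) (m : ℕ) : ℤ × ℤ :=
  z + ∑ i ∈ Finset.univ.filter (fun i : Fin n => (i : ℕ) < m), σ i

/-- The probability that the first `n` increments of the simple random walk
(each uniform on the four unit vectors) satisfy the predicate `E`. -/
noncomputable def stepProb (n : ℕ) (E : (Fin n → ℤ × ℤ) → Prop) : ℝ :=
  (Nat.card {σ : Fin n → ↥dirs // E fun i => ((σ i : ℤ × ℤ))} : ℝ) / 4 ^ n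

/-- `P_z(S_{τ̄_A} = x)` : the walk started at `z` hits `A` (in finite time) for the
first time precisely at the point `x`.  Here `τ̄_A = min {m ≥ 0 : S_m ∈ A}`. -/
noncomputable def hitProb (z : ℤ × ℤ) (A : Set (ℤ × ℤ)) (x : ℤ × ℤ) : ℝ :=
  ∑' n : ℕ, stepProb n fun σ =>
    pos z σ n = x ∧ x ∈ A ∧ ∀ m < n, pos z σ m ∉ A

/-- `P_z(τ̄_A < τ̄_B)` : the walk started at `z` hits `A` strictly before hitting `B`. -/
noncomputable def hitBeforeProb (z : ℤ × ℤ) (A B : Set (ℤ × ℤ)) : ℝ :=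
  ∑' n : ℕ, stepProb n fun σ =>
    pos z σ n ∈ A ∧ pos z σ n ∉ B ∧ ∀ m < n, pos z σ m ∉ A ∧ pos z σ m ∉ B

/-- The stationary harmonic measure `H_{B,N}(x) = Σ_{z ∈ L_N \ B} P_z(S_{τ̄_{B ∪ L₀}} = x)`. -/
noncomputable def harm (B : Set (ℤ × ℤ)) (N : ℕ) (x : ℤ × ℤ) : ℝ :=
  ∑' z : ↥(lineH (N : ℤ) \ B), hitProb (z : ℤ × ℤ) (B ∪ lineH 0) x

/-- Average of `u` over the four neighbours. -/
noncomputable def avg (u : ℤ × ℤ → ℝ) (z : ℤ × ℤ) : ℝ :=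
  (u (z.1 + 1, z.2) + u (z.1 - 1, z.2) + u (z.1, z.2 + 1) + u (z.1, z.2 - 1)) / 4

open Classical in
/-- Killed evolution started from the point mass at `x`. -/
noncomputable def kev (A : Set (ℤ × ℤ)) (x : ℤ × ℤ) : ℕ → ℤ × ℤ → ℝ
  | 0 => fun z => if z = x then 1 else 0
  | n + 1 => fun z => if z ∈ A then 0 else avg (kev A x n) z

theorem kev_succ_mem {A : Set (ℤ × ℤ)} (x : ℤ × ℤ) (n : ℕ) {z : ℤ × ℤ} (h : z ∈ A) :
    kev A x (n + 1) z = 0 := by simp [kev, h]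

theorem kev_succ_not {A : Set (ℤ × ℤ)} (x : ℤ × ℤ) (n : ℕ) {z : ℤ × ℤ} (h : z ∉ A) :
    kev A x (n + 1) z = avg (kev A x n) z := by simp [kev, h]

theorem avg_nonneg {u : ℤ × ℤ → ℝ} (h : ∀ z, 0 ≤ u z) (z : ℤ × ℤ) : 0 ≤ avg u z := by
  unfold avg
  have := h (z.1 + 1, z.2)
  have := h (z.1 - 1, z.2)
  have := h (z.1, z.2 + 1)
  have := h (z.1, z.2 - 1)
  positivity

theorem kev_nonneg (A : Set (ℤ × ℤ)) (x : ℤ × ℤ) (n : ℕ) (z : ℤ × ℤ) : 0 ≤ kev A x n z := by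
  induction n generalizing z with
  | zero => simp only [kev]; split_ifs <;> norm_num
  | succ n ih =>
    by_cases h : z ∈ A
    · rw [kev_succ_mem x n h]
    · rw [kev_succ_not x n h]; exact avg_nonneg ih z

theorem kev_succ_le (A : Set (ℤ × ℤ)) (x : ℤ × ℤ) (n : ℕ) (z : ℤ × ℤ) :
    kev A x (n + 1) z ≤ avg (kev A x n) z := by
  by_cases h : z ∈ A
  · rw [kev_succ_mem x n h]; exact avg_nonneg (kev_nonneg A x n) z
  · rw [kev_succ_not x n h]

theorem avg_mono {u w : ℤ × ℤ → ℝ} (h : ∀ z, u z ≤ w z) (z : ℤ × ℤ) : avg u z ≤ avg w z := by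
  unfold avg
  have := h (z.1 + 1, z.2)
  have := h (z.1 - 1, z.2)
  have := h (z.1, z.2 + 1)
  have := h (z.1, z.2 - 1)
  linarith

/-! ### Translations -/

def shR : ℤ × ℤ ≃ ℤ × ℤ := Equiv.addRight ((1, 0) : ℤ × ℤ)
def shU : ℤ × ℤ ≃ ℤ × ℤ := Equiv.addRight ((0, 1) : ℤ × ℤ)

theorem shR_apply (z : ℤ × ℤ) : shR z = (z.1 + 1, z.2) := by
  simp [shR, Prod.ext_iff]
theorem shU_apply (z : ℤ × ℤ) : shU z = (z.1, z.2 + 1) := by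
  simp [shU, Prod.ext_iff]
theorem shR_symm_apply (z : ℤ × ℤ) : shR.symm z = (z.1 - 1, z.2) := by
  simp [shR, Prod.ext_iff, sub_eq_add_neg]
theorem shU_symm_apply (z : ℤ × ℤ) : shU.symm z = (z.1, z.2 - 1) := by
  simp [shU, Prod.ext_iff, sub_eq_add_neg]

theorem avg_eq (u : ℤ × ℤ → ℝ) (z : ℤ × ℤ) :
    avg u z = (u (shR z) + u (shR.symm z) + u (shU z) + u (shU.symm z)) / 4 := by
  rw [shR_apply, shU_apply, shR_symm_apply, shU_symm_apply]; rfl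

theorem fin_support_comp {u : ℤ × ℤ → ℝ} (h : (Function.support u).Finite) (e : ℤ × ℤ ≃ ℤ × ℤ) :
    (Function.support (fun z => u (e z))).Finite := by
  have : Function.support (fun z => u (e z)) = e ⁻¹' (Function.support u) := rfl
  rw [this]
  exact h.preimage e.injective.injOn

theorem avg_support {u : ℤ × ℤ → ℝ} (h : (Function.support u).Finite) :
    (Function.support (avg u)).Finite := by
  refine ((((fin_support_comp h shR).union (fin_support_comp h shR.symm)).union
    (fin_support_comp h shU)).union (fin_support_comp h shU.symm)).subset ?_
  intro z hz
  by_contra hcon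
  simp only [Set.mem_union, Function.mem_support, not_or, not_not] at hcon
  apply hz
  rw [avg_eq, hcon.1.1.1, hcon.1.1.2, hcon.1.2, hcon.2]; norm_num

theorem kev_support (A : Set (ℤ × ℤ)) (x : ℤ × ℤ) (n : ℕ) :
    (Function.support (kev A x n)).Finite := by
  induction n with
  | zero =>
    refine (Set.finite_singleton x).subset ?_
    intro z hz
    by_contra hne
    apply hz
    simp only [kev]
    rw [if_neg (show ¬ z = x from fun h => hne h)]
  | succ n ih =>
    refine (avg_support ih).subset ?_
    intro z hz hz'
    apply hz
    have h1 := kev_succ_le A x n z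
    have h2 := kev_nonneg A x (n + 1) z
    linarith

theorem summable_mul_of_support {u : ℤ × ℤ → ℝ} (h : (Function.support u).Finite)
    (w : ℤ × ℤ → ℝ) : Summable (fun z => u z * w z) := by
  apply summable_of_finite_support
  refine h.subset ?_
  intro z hz hz'
  apply hz
  simp only at hz' ⊢
  rw [hz', zero_mul]

theorem tsum_shift {u : ℤ × ℤ → ℝ} (w : ℤ × ℤ → ℝ) (e : ℤ × ℤ ≃ ℤ × ℤ) :
    ∑' z, u (e z) * w z = ∑' z, u z * w (e.symm z) := by
  rw [← e.tsum_eq (fun z => u z * w (e.symm z))]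
  simp

theorem tsum_avg_mul {u : ℤ × ℤ → ℝ} (h : (Function.support u).Finite) (w : ℤ × ℤ → ℝ) :
    ∑' z, avg u z * w z = ∑' z, u z * avg w z := by
  have s1 := summable_mul_of_support (fin_support_comp h shR) w
  have s2 := summable_mul_of_support (fin_support_comp h shR.symm) w
  have s3 := summable_mul_of_support (fin_support_comp h shU) w
  have s4 := summable_mul_of_support (fin_support_comp h shU.symm) w
  have t1 := summable_mul_of_support h (fun z => w (shR z))
  have t2 := summable_mul_of_support h (fun z => w (shR.symm z))
  have t3 := summable_mul_of_support h (fun z => w (shU z))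
  have t4 := summable_mul_of_support h (fun z => w (shU.symm z))
  have e1 : ∀ z, avg u z * w z = (1/4) * (u (shR z) * w z + u (shR.symm z) * w z
      + u (shU z) * w z + u (shU.symm z) * w z) := by
    intro z; rw [avg_eq]; ring
  have e2 : ∀ z, u z * avg w z = (1/4) * (u z * w (shR z) + u z * w (shR.symm z)
      + u z * w (shU z) + u z * w (shU.symm z)) := by
    intro z; rw [avg_eq]; ring
  rw [tsum_congr e1, tsum_congr e2, tsum_mul_left, tsum_mul_left,
    ((s1.add s2).add s3).tsum_add s4, (s1.add s2).tsum_add s3, s1.tsum_add s2,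
    ((t1.add t2).add t3).tsum_add t4, (t1.add t2).tsum_add t3, t1.tsum_add t2,
    tsum_shift w shR, tsum_shift w shR.symm, tsum_shift w shU, tsum_shift w shU.symm]
  simp only [Equiv.symm_symm]
  ring

/-! ### Row sums -/

/-- Mass in row `N` at time `n`. -/
noncomputable def row (A : Set (ℤ × ℤ)) (x : ℤ × ℤ) (n : ℕ) (N : ℤ) : ℝ :=
  ∑' i : ℤ, kev A x n (i, N)

theorem inj_row (N : ℤ) : Function.Injective (fun i : ℤ => ((i, N) : ℤ × ℤ)) := by
  intro a b h; simpa using h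

theorem summable_row {u : ℤ × ℤ → ℝ} (h : (Function.support u).Finite) (N : ℤ) :
    Summable (fun i : ℤ => u (i, N)) := by
  apply summable_of_finite_support
  exact h.preimage (inj_row N).injOn

theorem row_nonneg (A : Set (ℤ × ℤ)) (x : ℤ × ℤ) (n : ℕ) (N : ℤ) : 0 ≤ row A x n N :=
  tsum_nonneg fun _ => kev_nonneg _ _ _ _

theorem row_succ_le (A : Set (ℤ × ℤ)) (x : ℤ × ℤ) (n : ℕ) (N : ℤ) :
    row A x (n + 1) N ≤ (2 * row A x n N + row A x n (N + 1) + row A x n (N - 1)) / 4 := by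
  have hs := kev_support A x n
  have s0 : ∀ N, Summable (fun i : ℤ => kev A x n (i, N)) := summable_row hs
  have s1 : Summable (fun i : ℤ => kev A x n (i + 1, N)) :=
    (Equiv.addRight (1 : ℤ)).summable_iff.2 (s0 N)
  have s2 : Summable (fun i : ℤ => kev A x n (i - 1, N)) :=
    (Equiv.subRight (1 : ℤ)).summable_iff.2 (s0 N)
  have h1 : row A x (n + 1) N ≤ ∑' i : ℤ, avg (kev A x n) (i, N) :=
    (summable_row (kev_support A x (n + 1)) N).tsum_le_tsum
      (fun i => kev_succ_le A x n (i, N)) (summable_row (avg_support hs) N)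
  refine h1.trans (le_of_eq ?_)
  have e1 : ∑' i : ℤ, kev A x n (i + 1, N) = row A x n N :=
    (Equiv.addRight (1 : ℤ)).tsum_eq (fun i => kev A x n (i, N))
  have e2 : ∑' i : ℤ, kev A x n (i - 1, N) = row A x n N :=
    (Equiv.subRight (1 : ℤ)).tsum_eq (fun i => kev A x n (i, N))
  unfold avg
  simp only
  rw [tsum_div_const, ((s1.add s2).add (s0 (N+1))).tsum_add (s0 (N-1)),
    (s1.add s2).tsum_add (s0 (N+1)), s1.tsum_add s2, e1, e2]
  unfold row
  ring

theorem row_zero_self (A : Set (ℤ × ℤ)) (x : ℤ × ℤ) : row A x 0 x.2 = 1 := by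
  unfold row
  rw [tsum_eq_single x.1]
  · simp [kev]
  · intro i hi
    simp only [kev]
    rw [if_neg]
    intro h; apply hi; rw [← h]

theorem row_zero_ne (A : Set (ℤ × ℤ)) (x : ℤ × ℤ) {N : ℤ} (h : N ≠ x.2) : row A x 0 N = 0 := by
  unfold row
  rw [← tsum_zero (α := ℝ) (β := ℤ)]
  congr 1
  funext i
  simp only [kev]
  rw [if_neg]
  intro h'; apply h; rw [← h']

theorem row_succ_zero {A : Set (ℤ × ℤ)} (hA : lineH 0 ⊆ A) (x : ℤ × ℤ) (n : ℕ) :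
    row A x (n + 1) 0 = 0 := by
  unfold row
  rw [← tsum_zero (α := ℝ) (β := ℤ)]
  congr 1
  funext i
  exact kev_succ_mem x n (hA rfl)

theorem row_partial_le {A : Set (ℤ × ℤ)} (hA : lineH 0 ⊆ A) {x : ℤ × ℤ} (hx : 0 ≤ x.2)
    (n : ℕ) (N : ℤ) (hN : 0 ≤ N) :
    ∑ m ∈ Finset.range n, row A x m N ≤ 4 * ((min N x.2 : ℤ) : ℝ) + 1 := by
  induction n generalizing N with
  | zero =>
    have : (0:ℝ) ≤ ((min N x.2 : ℤ) : ℝ) := by exact_mod_cast le_min hN hx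
    simp only [Finset.range_zero, Finset.sum_empty]; linarith
  | succ n ih =>
    rw [Finset.sum_range_succ']
    rcases hN.eq_or_lt with h0 | hpos
    · subst h0
      simp only [row_succ_zero hA, Finset.sum_const_zero, zero_add]
      have : (0:ℝ) ≤ ((min 0 x.2 : ℤ) : ℝ) := by exact_mod_cast le_min le_rfl hx
      by_cases h : (0:ℤ) = x.2
      · rw [h, row_zero_self, ← h]; simpa using this
      · rw [row_zero_ne A x h]; linarith
    · have hsum : ∑ m ∈ Finset.range n, row A x (m + 1) N ≤
          (2 * ∑ m ∈ Finset.range n, row A x m N + ∑ m ∈ Finset.range n, row A x m (N + 1)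
            + ∑ m ∈ Finset.range n, row A x m (N - 1)) / 4 := by
        rw [Finset.mul_sum, ← Finset.sum_add_distrib, ← Finset.sum_add_distrib, Finset.sum_div]
        exact Finset.sum_le_sum fun m _ => row_succ_le A x m N
      have i1 := ih N hN
      have i2 := ih (N + 1) (by omega)
      have i3 := ih (N - 1) (by omega)
      by_cases h : N = x.2
      · have a1 : min N x.2 = N := by omega
        have a2 : min (N + 1) x.2 = N := by omega
        have a3 : min (N - 1) x.2 = N - 1 := by omega
        rw [a1] at i1 ⊢; rw [a2] at i2; rw [a3] at i3
        push_cast at i3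
        have := row_zero_self A x
        rw [← h] at this
        rw [this]; linarith
      · rw [row_zero_ne A x h]
        have : (2 * (min N x.2 : ℤ) + min (N+1) x.2 + min (N-1) x.2) = 4 * min N x.2 := by omega
        have : (2 * ((min N x.2 : ℤ) : ℝ) + ((min (N+1) x.2 : ℤ) : ℝ) + ((min (N-1) x.2 : ℤ) : ℝ))
          = 4 * ((min N x.2 : ℤ) : ℝ) := by exact_mod_cast this
        linarith

theorem summable_rows {A : Set (ℤ × ℤ)} (hA : lineH 0 ⊆ A) {x : ℤ × ℤ} (hx : 0 ≤ x.2)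
    (N : ℤ) (hN : 0 ≤ N) : Summable (fun n => row A x n N) :=
  summable_of_sum_range_le (fun n => row_nonneg A x n N) (fun n => row_partial_le hA hx n N hN)

/-- Total mass in row `N`. -/
noncomputable def tot (A : Set (ℤ × ℤ)) (x : ℤ × ℤ) (N : ℤ) : ℝ := ∑' n, row A x n N

theorem tot_nonneg (A : Set (ℤ × ℤ)) (x : ℤ × ℤ) (N : ℤ) : 0 ≤ tot A x N :=
  tsum_nonneg fun n => row_nonneg A x n N

theorem tot_le {A : Set (ℤ × ℤ)} (hA : lineH 0 ⊆ A) {x : ℤ × ℤ} (hx : 0 ≤ x.2)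
    (N : ℤ) (hN : 0 ≤ N) : tot A x N ≤ 4 * (x.2 : ℝ) + 1 := by
  refine Real.tsum_le_of_sum_range_le (fun n => row_nonneg A x n N) fun n => ?_
  refine (row_partial_le hA hx n N hN).trans ?_
  have : ((min N x.2 : ℤ) : ℝ) ≤ x.2 := by exact_mod_cast min_le_right _ _
  linarith

theorem tot_convex {A : Set (ℤ × ℤ)} (hA : lineH 0 ⊆ A) {x : ℤ × ℤ} (hx : 0 ≤ x.2)
    (N : ℤ) (hN : x.2 < N) : 2 * tot A x N ≤ tot A x (N + 1) + tot A x (N - 1) := by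
  have s := summable_rows hA hx
  have s1 := s N (by omega)
  have s2 := s (N + 1) (by omega)
  have s3 := s (N - 1) (by omega)
  have h1 : tot A x N = ∑' n, row A x (n + 1) N := by
    unfold tot
    rw [s1.tsum_eq_zero_add, row_zero_ne A x hN.ne', zero_add]
  have h2 : ∑' n, row A x (n + 1) N ≤
      ∑' n, (2 * row A x n N + row A x n (N + 1) + row A x n (N - 1)) / 4 :=
    ((summable_nat_add_iff 1).2 s1).tsum_le_tsum (fun n => row_succ_le A x n N)
      ((((s1.mul_left 2).add s2).add s3).div_const 4)
  rw [tsum_div_const, ((s1.mul_left 2).add s2).tsum_add s3, (s1.mul_left 2).tsum_add s2,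
    tsum_mul_left, ← h1] at h2
  unfold tot at *
  linarith

theorem convex_bounded_tendsto {a : ℕ → ℝ} (k : ℕ) (C : ℝ) (h0 : ∀ n, 0 ≤ a n)
    (hC : ∀ n, a n ≤ C) (hc : ∀ n, k ≤ n → 2 * a (n + 1) ≤ a (n + 2) + a n) :
    ∃ l, Tendsto a atTop (nhds l) := by
  have hd : ∀ n, k ≤ n → ∀ j, a (n + 1) - a n ≤ a (n + j + 1) - a (n + j) := by
    intro n hn j
    induction j with
    | zero => simp
    | succ j ih => have := hc (n + j) (by omega)
                   have e : n + (j + 1) = n + j + 1 := by ring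
                   rw [e]
                   linarith
  have hanti : ∀ n, k ≤ n → a (n + 1) ≤ a n := by
    intro n hn
    by_contra hlt
    push Not at hlt
    have grow : ∀ j : ℕ, a n + j * (a (n + 1) - a n) ≤ a (n + j) := by
      intro j
      induction j with
      | zero => simp
      | succ j ih =>
        have := hd n hn j
        have e : n + (j + 1) = n + j + 1 := by ring
        rw [e]; push_cast; linarith
    obtain ⟨j, hj⟩ := exists_nat_gt (C / (a (n + 1) - a n))
    rw [div_lt_iff₀ (by linarith)] at hj
    have := grow j
    have := hC (n + j)
    have := h0 n
    linarith
  have anti : Antitone (fun n => a (n + k)) := by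
    apply antitone_nat_of_succ_le
    intro n
    have := hanti (n + k) (by omega)
    have e : n + 1 + k = n + k + 1 := by ring
    rw [e]; exact this
  have ht := tendsto_atTop_ciInf anti ⟨0, by rintro _ ⟨n, rfl⟩; exact h0 _⟩
  exact ⟨_, (tendsto_add_atTop_iff_nat k).1 ht⟩

/-! ### Link with `stepProb` and `harm` -/

theorem pos_cons_succ (z : ℤ × ℤ) {n : ℕ} (d : ℤ × ℤ) (σ : Fin n → ℤ × ℤ) (m : ℕ) :
    pos z (Fin.cons d σ : Fin (n + 1) → ℤ × ℤ) (m + 1) = pos (z + d) σ m := by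
  unfold pos
  rw [Finset.sum_filter, Finset.sum_filter, Fin.sum_univ_succ]
  simp [add_assoc]

theorem pos_zero (z : ℤ × ℤ) {n : ℕ} (σ : Fin n → ℤ × ℤ) : pos z σ 0 = z := by
  simp [pos]

theorem stepProb_succ (n : ℕ) (E : (Fin (n + 1) → ℤ × ℤ) → Prop) :
    stepProb (n + 1) E = (∑ d ∈ dirs, stepProb n (fun σ => E (Fin.cons d σ))) / 4 := by
  classical
  have key : Nat.card {σ : Fin (n + 1) → ↥dirs // E fun i => ((σ i : ℤ × ℤ))} =
      ∑ d : ↥dirs, Nat.card {σ : Fin n → ↥dirs // E (Fin.cons (d : ℤ × ℤ) fun i => ((σ i : ℤ × ℤ)))} := by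
    rw [← Nat.card_sigma]
    refine Nat.card_congr ?_
    refine ((Equiv.subtypeEquiv (Fin.consEquiv (fun _ => ↥dirs)).symm ?_).trans
      (Equiv.subtypeProdEquivSigmaSubtype (fun (d : ↥dirs) (σ : Fin n → ↥dirs) =>
        E (Fin.cons (d : ℤ × ℤ) fun i => ((σ i : ℤ × ℤ))))))
    intro σ
    have : (Fin.cons ((σ 0 : ↥dirs) : ℤ × ℤ) (fun i : Fin n => ((σ i.succ : ↥dirs) : ℤ × ℤ)) : Fin (n+1) → ℤ × ℤ)
        = fun i => ((σ i : ℤ × ℤ)) := by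
      funext i
      refine Fin.cases ?_ (fun j => ?_) i <;> simp
    rw [← this]
    rfl
  unfold stepProb
  rw [key, ← Finset.sum_coe_sort dirs]
  push_cast
  rw [← Finset.sum_div, pow_succ, div_div]

theorem stepProb_false (n : ℕ) (E : (Fin n → ℤ × ℤ) → Prop) (h : ∀ σ, ¬ E σ) :
    stepProb n E = 0 := by
  unfold stepProb
  have : IsEmpty {σ : Fin n → ↥dirs // E fun i => ((σ i : ℤ × ℤ))} := ⟨fun s => h _ s.2⟩
  simp

theorem stepProb_eq_kev {A : Set (ℤ × ℤ)} {x : ℤ × ℤ} (hx : x ∈ A) (n : ℕ) (z : ℤ × ℤ) :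
    stepProb n (fun σ => pos z σ n = x ∧ x ∈ A ∧ ∀ m < n, pos z σ m ∉ A) = kev A x n z := by
  induction n generalizing z with
  | zero =>
    by_cases h : z = x
    · simp [kev, stepProb, pos_zero, h, hx]
    · rw [stepProb_false]
      · simp [kev, h]
      · intro σ; simp [pos_zero, h]
  | succ n ih =>
    by_cases h : z ∈ A
    · rw [kev_succ_mem x n h, stepProb_false]
      rintro σ ⟨-, -, h3⟩
      exact h3 0 (by omega) (by rwa [pos_zero])
    · rw [kev_succ_not x n h, stepProb_succ]
      have : ∀ d : ℤ × ℤ, stepProb n (fun σ => pos z (Fin.cons d σ : Fin (n+1) → ℤ × ℤ) (n + 1) = x ∧ x ∈ A ∧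
          ∀ m < n + 1, pos z (Fin.cons d σ : Fin (n+1) → ℤ × ℤ) m ∉ A) = kev A x n (z + d) := by
        intro d
        rw [← ih]
        congr 1
        funext σ
        rw [pos_cons_succ]
        refine propext (and_congr_right fun _ => and_congr_right fun _ => ?_)
        constructor
        · intro h' m hm
          have := h' (m + 1) (by omega)
          rwa [pos_cons_succ] at this
        · intro h' m hm
          cases m with
          | zero => rwa [pos_zero]
          | succ m => rw [pos_cons_succ]; exact h' m (by omega)
      simp only [this]
      unfold dirs avg
      rw [Finset.sum_insert (by decide), Finset.sum_insert (by decide),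
        Finset.sum_insert (by decide), Finset.sum_singleton]
      have e1 : z + (1, 0) = (z.1 + 1, z.2) := by ext <;> simp
      have e2 : z + (-1, 0) = (z.1 - 1, z.2) := by ext <;> simp [sub_eq_add_neg]
      have e3 : z + (0, 1) = (z.1, z.2 + 1) := by ext <;> simp
      have e4 : z + (0, -1) = (z.1, z.2 - 1) := by ext <;> simp [sub_eq_add_neg]
      rw [e1, e2, e3, e4]
      ring

theorem kev_mem_ne {A : Set (ℤ × ℤ)} {x z : ℤ × ℤ} (hz : z ∈ A) (hne : z ≠ x) (n : ℕ) :
    kev A x n z = 0 := by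
  cases n with
  | zero => simp [kev, hne]
  | succ n => exact kev_succ_mem x n hz

theorem harm_eq_tot {B : Set (ℤ × ℤ)} {x : ℤ × ℤ} (hx : x ∈ B) (hx0 : 0 ≤ x.2) (N : ℕ)
    (hN : x.2 < N) : harm B N x = tot (B ∪ lineH 0) x N := by
  have hA : lineH 0 ⊆ B ∪ lineH 0 := Set.subset_union_right
  have hh : ∀ z, hitProb z (B ∪ lineH 0) x = ∑' n, kev (B ∪ lineH 0) x n z := by
    intro z
    unfold hitProb
    exact tsum_congr fun n => stepProb_eq_kev (Or.inl hx) n z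
  unfold harm
  rw [tsum_subtype (lineH (N : ℤ) \ B) (fun z => hitProb z (B ∪ lineH 0) x)]
  rw [← (inj_row (N : ℤ)).tsum_eq]
  · have h1 : ∀ i : ℤ, (lineH (N : ℤ) \ B).indicator (fun z => hitProb z (B ∪ lineH 0) x) (i, (N : ℤ))
        = ∑' n, kev (B ∪ lineH 0) x n (i, (N : ℤ)) := by
      intro i
      by_cases hB : ((i, (N : ℤ)) : ℤ × ℤ) ∈ B
      · rw [Set.indicator_of_notMem (fun h => h.2 hB)]
        have hne : ((i, (N : ℤ)) : ℤ × ℤ) ≠ x := by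
          intro h; rw [← h] at hN; simp at hN
        simp [kev_mem_ne (show ((i, (N : ℤ)) : ℤ × ℤ) ∈ B ∪ lineH 0 from Or.inl hB) hne]
      · rw [Set.indicator_of_mem (show _ ∈ lineH (N : ℤ) \ B from ⟨rfl, hB⟩), hh]
    rw [tsum_congr h1]
    unfold tot row
    have hsum : Summable (fun p : ℕ × ℤ => kev (B ∪ lineH 0) x p.1 (p.2, (N : ℤ))) := by
      rw [summable_prod_of_nonneg (fun p => kev_nonneg _ _ _ _)]
      exact ⟨fun n => summable_row (kev_support _ _ n) _,
        summable_rows hA hx0 N (by omega)⟩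
    exact (Summable.tsum_comm (f := fun (n : ℕ) (i : ℤ) => kev (B ∪ lineH 0) x n (i, (N : ℤ))) hsum)
  · intro z hz
    have : z ∈ lineH (N : ℤ) \ B := by
      by_contra h
      exact hz (Set.indicator_of_notMem h _)
    exact ⟨z.1, by have := this.1; simp only [lineH, Set.mem_setOf_eq] at this; rw [← this]⟩

/-! ### Domination -/

theorem kev_dom (A : Set (ℤ × ℤ)) (x y : ℤ × ℤ) (L n : ℕ) (z : ℤ × ℤ) :
    kev A x L y * kev A y n z ≤ kev A x (n + L) z := by
  induction n generalizing z with
  | zero =>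
    by_cases h : z = y
    · simp [kev, h]
    · have := kev_nonneg A x L z
      simp [kev, h, this]
  | succ n ih =>
    have e : n + 1 + L = n + L + 1 := by ring
    rw [e]
    by_cases h : z ∈ A
    · rw [kev_succ_mem y n h, kev_succ_mem x _ h, mul_zero]
    · rw [kev_succ_not y n h, kev_succ_not x _ h]
      refine le_trans (le_of_eq ?_) (avg_mono ih z)
      unfold avg; ring

theorem tot_dom {A : Set (ℤ × ℤ)} (hA : lineH 0 ⊆ A) {x y : ℤ × ℤ} (hx : 0 ≤ x.2) (hy : 0 ≤ y.2)
    (L : ℕ) (N : ℤ) (hN : 0 ≤ N) : kev A x L y * tot A y N ≤ tot A x N := by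
  have hr : ∀ n, kev A x L y * row A y n N ≤ row A x (n + L) N := by
    intro n
    unfold row
    rw [← tsum_mul_left]
    exact ((summable_row (kev_support A y n) N).mul_left _).tsum_le_tsum
      (fun i => kev_dom A x y L n (i, N)) (summable_row (kev_support A x (n + L)) N)
  have sx := summable_rows hA hx N hN
  have sy := summable_rows hA hy N hN
  unfold tot
  rw [← tsum_mul_left, ← sx.sum_add_tsum_nat_add L]
  have h1 := (sy.mul_left (kev A x L y)).tsum_le_tsum hr ((summable_nat_add_iff L).2 sx)
  have h2 : 0 ≤ ∑ i ∈ Finset.range L, row A x i N :=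
    Finset.sum_nonneg fun i _ => row_nonneg A x i N
  linarith

theorem kev_column {A : Set (ℤ × ℤ)} (c t : ℤ) (hfree : ∀ j, t < j → ((c, j) : ℤ × ℤ) ∉ A) (k : ℕ) :
    0 < kev A (c, t) k (c, t + k) := by
  induction k with
  | zero => simp [kev]
  | succ k ih =>
    rw [kev_succ_not _ _ (hfree _ (by push_cast; omega))]
    unfold avg
    have h1 := kev_nonneg A (c, t) k (c + 1, t + ((k + 1 : ℕ) : ℤ))
    have h2 := kev_nonneg A (c, t) k (c - 1, t + ((k + 1 : ℕ) : ℤ))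
    have h3 := kev_nonneg A (c, t) k (c, t + ((k + 1 : ℕ) : ℤ) + 1)
    have e : t + ((k + 1 : ℕ) : ℤ) - 1 = t + k := by push_cast; ring
    simp only
    rw [e]
    linarith

/-! ### Lower bound through a barrier -/

theorem kev_below {A : Set (ℤ × ℤ)} (hA : lineH 0 ⊆ A) {y : ℤ × ℤ} (hy : 0 < y.2) (n : ℕ)
    (z : ℤ × ℤ) (hz : z.2 ≤ 0) : kev A y n z = 0 := by
  induction n generalizing z with
  | zero =>
    simp only [kev]
    rw [if_neg]
    rintro rfl; omega
  | succ n ih =>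
    by_cases h : z ∈ A
    · exact kev_succ_mem y n h
    · have hz' : z.2 < 0 := lt_of_le_of_ne hz (fun h0 => h (hA h0))
      rw [kev_succ_not y n h]
      unfold avg
      rw [ih _ (by simpa using hz), ih _ (by simpa using hz), ih _ (by simp only; omega),
        ih _ (by simp only; omega)]
      norm_num

theorem tsum_row_indicator {u : ℤ × ℤ → ℝ} (M : ℤ) :
    ∑' z : ℤ × ℤ, u z * (if z.2 = M then 1 else 0) = ∑' i : ℤ, u (i, M) := by
  rw [← (inj_row M).tsum_eq]
  · simp
  · intro z hz
    by_cases h : z.2 = M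
    · exact ⟨z.1, by rw [← h]⟩
    · exfalso; apply hz; simp [h]

theorem tot_lower {A : Set (ℤ × ℤ)} (hA : lineH 0 ⊆ A) {y : ℤ × ℤ} (hy : 0 < y.2)
    (V : ℤ × ℤ → ℝ) (hVA : ∀ z ∈ A, (z.2 : ℝ) ≤ V z)
    (hVh : ∀ z : ℤ × ℤ, 0 ≤ z.2 → (z.2 : ℝ) / 2 ≤ V z)
    (hVavg : ∀ z : ℤ × ℤ, 1 ≤ z.2 → avg V z = V z)
    (M : ℕ) (hM : y.2 ≤ M) : 4 * ((y.2 : ℝ) - V y) ≤ tot A y M := by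
  set U : ℤ × ℤ → ℝ := fun z => min (z.2 : ℝ) M - V z with hU
  have hUA : ∀ z ∈ A, U z ≤ 0 := by
    intro z hz
    have h1 := hVA z hz
    have h2 : min (z.2 : ℝ) M ≤ z.2 := min_le_left _ _
    simp only [hU]; linarith
  have hUavg : ∀ z : ℤ × ℤ, 1 ≤ z.2 → avg U z = U z - (1/4) * (if z.2 = (M : ℤ) then 1 else 0) := by
    intro z hz
    have hv := hVavg z hz
    have e : avg U z = (2 * min (z.2 : ℝ) M + min ((z.2 : ℝ) + 1) M + min ((z.2 : ℝ) - 1) M) / 4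
        - avg V z := by
      simp only [hU, avg]; push_cast; ring
    rw [e, hv]
    have hc : (2 * min (z.2 : ℝ) M + min ((z.2 : ℝ) + 1) M + min ((z.2 : ℝ) - 1) M) =
        4 * min (z.2 : ℝ) M - (if z.2 = (M : ℤ) then 1 else 0) := by
      have : (2 * min z.2 (M : ℤ) + min (z.2 + 1) (M : ℤ) + min (z.2 - 1) (M : ℤ)) =
        4 * min z.2 (M : ℤ) - (if z.2 = (M : ℤ) then 1 else 0) := by
        split_ifs <;> omega
      exact_mod_cast this
    rw [hc]; simp only [hU]; ring
  set W : ℕ → ℝ := fun n => ∑' z, kev A y n z * U z with hW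
  have hs := kev_support A y
  have hstep : ∀ n, W n - (1/4) * row A y n M ≤ W (n + 1) := by
    intro n
    have h1 : ∑' z, avg (kev A y n) z * U z ≤ W (n + 1) := by
      refine (summable_mul_of_support (avg_support (hs n)) U).tsum_le_tsum ?_
        (summable_mul_of_support (hs (n + 1)) U)
      intro z
      by_cases h : z ∈ A
      · rw [kev_succ_mem y n h, zero_mul]
        exact mul_nonpos_of_nonneg_of_nonpos (avg_nonneg (kev_nonneg A y n) z) (hUA z h)
      · rw [kev_succ_not y n h]
    rw [tsum_avg_mul (hs n)] at h1
    have h2 : ∀ z, kev A y n z * avg U z = kev A y n z * U z -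
        (1/4) * (kev A y n z * (if z.2 = (M : ℤ) then 1 else 0)) := by
      intro z
      by_cases hz : z.2 ≤ 0
      · rw [kev_below hA hy n z hz]; ring
      · rw [hUavg z (by omega)]; ring
    rw [tsum_congr h2, (summable_mul_of_support (hs n) U).tsum_sub
      ((summable_mul_of_support (hs n) _).mul_left _), tsum_mul_left, tsum_row_indicator] at h1
    exact h1
  have hiter : ∀ n, W 0 ≤ W n + (1/4) * ∑ m ∈ Finset.range n, row A y m M := by
    intro n
    induction n with
    | zero => simp
    | succ n ih =>
      rw [Finset.sum_range_succ]
      have := hstep n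
      linarith
  have hW0 : W 0 = (y.2 : ℝ) - V y := by
    simp only [hW]
    rw [tsum_eq_single y]
    · have : ((y.2 : ℤ) : ℝ) ≤ M := by exact_mod_cast hM
      simp [kev, hU, this]
    · intro z hz; simp [kev, hz]
  have hWle : ∀ n, W n ≤ M * ∑ N ∈ Finset.range (2 * M), row A y n N := by
    intro n
    have e : ∑ N ∈ Finset.range (2 * M), row A y n N =
        ∑' z, kev A y n z * ∑ N ∈ Finset.range (2 * M), (if z.2 = (N : ℤ) then 1 else 0) := by
      simp only [Finset.mul_sum]
      rw [Summable.tsum_finsetSum (fun N _ => summable_mul_of_support (hs n) _)]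
      refine Finset.sum_congr rfl fun N _ => ?_
      rw [tsum_row_indicator]; rfl
    rw [e, ← tsum_mul_left]
    refine (summable_mul_of_support (hs n) U).tsum_le_tsum ?_
      ((summable_mul_of_support (hs n) _).mul_left _)
    intro z
    have hk := kev_nonneg A y n z
    by_cases hz : z.2 ≤ 0
    · rw [kev_below hA hy n z hz]; simp
    · have hV := hVh z (by omega)
      have hz0 : (0:ℝ) < z.2 := by exact_mod_cast (by omega : 0 < z.2)
      have hmin : min (z.2 : ℝ) M ≤ M := min_le_right _ _
      have hS0 : (0:ℝ) ≤ ∑ N ∈ Finset.range (2 * M), (if z.2 = (N : ℤ) then (1:ℝ) else 0) :=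
        Finset.sum_nonneg fun N _ => by split_ifs <;> norm_num
      have hUM : U z ≤ M * ∑ N ∈ Finset.range (2 * M), (if z.2 = (N : ℤ) then (1:ℝ) else 0) := by
        by_cases hbig : z.2 < 2 * (M : ℤ)
        · have hS1 : (1:ℝ) ≤ ∑ N ∈ Finset.range (2 * M), (if z.2 = (N : ℤ) then (1:ℝ) else 0) := by
            have hmem : z.2.toNat ∈ Finset.range (2 * M) := by
              rw [Finset.mem_range]; omega
            have := Finset.single_le_sum (f := fun N : ℕ => if z.2 = (N : ℤ) then (1:ℝ) else 0)
              (fun N _ => by split_ifs <;> norm_num) hmem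
            have e : z.2 = (z.2.toNat : ℤ) := by omega
            simp only [← e, if_true] at this
            exact this
          have : (M : ℝ) * 1 ≤ M * ∑ N ∈ Finset.range (2 * M), (if z.2 = (N : ℤ) then (1:ℝ) else 0) :=
            mul_le_mul_of_nonneg_left hS1 (Nat.cast_nonneg _)
          simp only [hU]; linarith
        · have : (2 : ℝ) * M ≤ z.2 := by exact_mod_cast (by omega : 2 * (M : ℤ) ≤ z.2)
          have := mul_nonneg (Nat.cast_nonneg (α := ℝ) M) hS0
          simp only [hU]; linarith
      calc kev A y n z * U z ≤ kev A y n z * _ := mul_le_mul_of_nonneg_left hUM hk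
        _ = _ := by ring
  have hlim : Tendsto (fun n => (M : ℝ) * ∑ N ∈ Finset.range (2 * M), row A y n N) atTop (nhds 0) := by
    have : Tendsto (fun n => (M : ℝ) * ∑ N ∈ Finset.range (2 * M), row A y n N) atTop
        (nhds ((M : ℝ) * ∑ N ∈ Finset.range (2 * M), (0 : ℝ))) := by
      refine Tendsto.const_mul _ (tendsto_finsetSum _ fun N _ => ?_)
      exact (summable_rows hA hy.le N (by omega)).tendsto_atTop_zero
    simpa using this
  have hfin : ∀ n, (y.2 : ℝ) - V y - (1/4) * tot A y M ≤
      (M : ℝ) * ∑ N ∈ Finset.range (2 * M), row A y n N := by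
    intro n
    have h1 := hiter n
    have h2 := hWle n
    have h3 : ∑ m ∈ Finset.range n, row A y m M ≤ tot A y M :=
      (summable_rows hA hy.le (M : ℤ) (by omega)).sum_le_tsum _ (fun m _ => row_nonneg A y m M)
    rw [hW0] at h1
    linarith
  have := ge_of_tendsto' hlim hfin
  linarith

/-! ### The barrier function -/

/-- decay rate -/
noncomputable def rho (θ : ℝ) : ℝ := (2 - Real.cos θ) - Real.sqrt ((2 - Real.cos θ) ^ 2 - 1)

theorem rho_disc (θ : ℝ) : 0 ≤ (2 - Real.cos θ) ^ 2 - 1 := by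
  have := Real.cos_le_one θ
  nlinarith

theorem rho_quad (θ : ℝ) : rho θ ^ 2 + 1 = 2 * (2 - Real.cos θ) * rho θ := by
  have := Real.sq_sqrt (rho_disc θ)
  unfold rho
  nlinarith

theorem rho_pos (θ : ℝ) : 0 < rho θ := by
  have h1 := Real.cos_le_one θ
  have h2 := rho_quad θ
  by_contra h
  push Not at h
  nlinarith [sq_nonneg (rho θ)]

theorem rho_le_one (θ : ℝ) : rho θ ≤ 1 := by
  have h1 := Real.cos_le_one θ
  have : (2 - Real.cos θ) - 1 ≤ Real.sqrt ((2 - Real.cos θ) ^ 2 - 1) := by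
    apply Real.le_sqrt_of_sq_le
    nlinarith
  unfold rho; linarith

theorem rho_ge (θ : ℝ) (hθ : 0 ≤ θ) : 1 - rho θ ≤ 2 * θ := by
  have h1 := Real.cos_le_one θ
  have h2 := Real.neg_one_le_cos θ
  have h3 := Real.one_sub_sq_div_two_le_cos (x := θ)
  have : Real.sqrt ((2 - Real.cos θ) ^ 2 - 1) ≤ 2 * θ := by
    apply Real.sqrt_le_iff.2
    constructor
    · linarith
    · nlinarith
  unfold rho; linarith

/-- The building block. -/
noncomputable def blk (θ : ℝ) (z : ℤ × ℤ) : ℝ := 1 - Real.cos (θ * z.1) * rho θ ^ z.2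

theorem avg_blk (θ : ℝ) (z : ℤ × ℤ) : avg (blk θ) z = blk θ z := by
  have hr := rho_quad θ
  have hp := (rho_pos θ).ne'
  unfold avg blk
  simp only
  rw [zpow_add_one₀ hp, zpow_sub_one₀ hp]
  push_cast
  have e1 : Real.cos (θ * (z.1 + 1)) + Real.cos (θ * (z.1 - 1)) = 2 * Real.cos (θ * z.1) * Real.cos θ := by
    rw [mul_add, mul_sub, mul_one, Real.cos_add, Real.cos_sub]; ring
  have e2 : rho θ + (rho θ)⁻¹ = 2 * (2 - Real.cos θ) := by
    field_simp
    linarith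
  linear_combination (-(rho θ ^ z.2) / 4) * e1 - Real.cos (θ * z.1) * rho θ ^ z.2 / 4 * e2

theorem zpow_rho_le {θ : ℝ} {j : ℤ} (hj : 0 ≤ j) : rho θ ^ j ≤ 1 := by
  lift j to ℕ using hj
  rw [zpow_natCast]
  exact pow_le_one₀ (rho_pos θ).le (rho_le_one θ)

theorem zpow_rho_ge {θ : ℝ} (hθ : 0 ≤ θ) {j : ℤ} (hj : 0 ≤ j) : 1 - 2 * θ * j ≤ rho θ ^ j := by
  lift j to ℕ using hj
  rw [zpow_natCast]
  have h := one_add_mul_le_pow (a := rho θ - 1) (by linarith [rho_pos θ]) j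
  have h2 := rho_ge θ hθ
  have : (j : ℝ) * (1 - rho θ) ≤ j * (2 * θ) := mul_le_mul_of_nonneg_left h2 (Nat.cast_nonneg _)
  rw [add_sub_cancel] at h
  push_cast
  linarith

theorem blk_nonneg (θ : ℝ) (z : ℤ × ℤ) (hz : 0 ≤ z.2) : 0 ≤ blk θ z := by
  unfold blk
  have h1 := zpow_rho_le (θ := θ) hz
  have h2 : 0 < rho θ ^ z.2 := zpow_pos (rho_pos θ) _
  have := Real.cos_le_one (θ * z.1)
  nlinarith

theorem blk_le_two (θ : ℝ) (z : ℤ × ℤ) (hz : 0 ≤ z.2) : blk θ z ≤ 2 := by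
  unfold blk
  have h1 := zpow_rho_le (θ := θ) hz
  have h2 : 0 < rho θ ^ z.2 := zpow_pos (rho_pos θ) _
  have := Real.neg_one_le_cos (θ * z.1)
  nlinarith

theorem blk_le (θ : ℝ) (hθ : 0 ≤ θ) (z : ℤ × ℤ) (hz : 0 ≤ z.2) :
    blk θ z ≤ θ * (|(z.1 : ℝ)| + 2 * z.2) := by
  unfold blk
  have h1 := zpow_rho_le (θ := θ) hz
  have h2 : 0 < rho θ ^ z.2 := zpow_pos (rho_pos θ) _
  have h3 := zpow_rho_ge hθ hz
  have h4 := Real.cos_le_one (θ * z.1)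
  have h5 : 1 - Real.cos (θ * z.1) ≤ θ * |(z.1 : ℝ)| := by
    have a := Real.one_sub_sq_div_two_le_cos (x := θ * z.1)
    have b := Real.neg_one_le_cos (θ * z.1)
    have c : (θ * z.1) ^ 2 = (θ * |(z.1 : ℝ)|) ^ 2 := by rw [mul_pow, mul_pow, sq_abs]
    have d : 0 ≤ θ * |(z.1 : ℝ)| := by positivity
    by_cases h : θ * |(z.1 : ℝ)| ≤ 2
    · nlinarith
    · push Not at h; linarith
  have : (1 - Real.cos (θ * z.1)) * rho θ ^ z.2 ≤ (1 - Real.cos (θ * z.1)) * 1 :=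
    mul_le_mul_of_nonneg_left h1 (by linarith)
  nlinarith

theorem blk_lower (θ : ℝ) (z : ℤ × ℤ) (hz : 0 ≤ z.2) (h1 : 1 ≤ θ * |(z.1 : ℝ)|)
    (h2 : θ * |(z.1 : ℝ)| ≤ 2) (hθ : 0 ≤ θ) : 1 / 4 ≤ blk θ z := by
  have hc : Real.cos (θ * z.1) = Real.cos (θ * |(z.1 : ℝ)|) := by
    rw [← Real.cos_abs (θ * z.1), abs_mul, abs_of_nonneg hθ]
  have hle : Real.cos (θ * |(z.1 : ℝ)|) ≤ Real.cos 1 :=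
    Real.cos_le_cos_of_nonneg_of_le_pi (by norm_num) (by linarith [Real.pi_gt_three]) h1
  have h3 : Real.cos 1 ≤ 5 / 9 := Real.cos_one_le
  have h4 := zpow_rho_le (θ := θ) hz
  have h5 : 0 < rho θ ^ z.2 := zpow_pos (rho_pos θ) _
  unfold blk
  rw [hc]
  nlinarith

theorem exists_barrier (β : ℝ) (h0 : 0 < β) (h1 : β < 1) :
    ∃ v : ℤ × ℤ → ℝ, (∀ z : ℤ × ℤ, 0 ≤ z.2 → 0 ≤ v z) ∧
      (∀ z : ℤ × ℤ, 1 ≤ z.2 → avg v z = v z) ∧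
      (∀ z : ℤ × ℤ, 0 ≤ z.2 → |(z.1 : ℝ)| ^ β ≤ v z) ∧
      (∀ c : ℤ, ∀ ε > 0, ∀ᶠ j : ℕ in atTop, v (c, j) ≤ ε * j) := by
  set q : ℝ := 2 ^ β with hq
  have hq0 : 0 < q := by positivity
  have hq2 : q < 2 := by
    calc q < 2 ^ (1 : ℝ) := Real.rpow_lt_rpow_of_exponent_lt (by norm_num) h1
      _ = 2 := Real.rpow_one 2
  have hg : Summable (fun k : ℕ => (q / 2) ^ k) :=
    summable_geometric_of_lt_one (by positivity) (by linarith)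
  set θ : ℕ → ℝ := fun k => (1 / 2) ^ k with hθ
  have hθ0 : ∀ k, 0 ≤ θ k := fun k => by simp only [hθ]; positivity
  have hqθ : ∀ k, q ^ k * θ k = (q / 2) ^ k := by
    intro k; simp only [hθ]; rw [← mul_pow]; congr 1; ring
  have hsum : ∀ z : ℤ × ℤ, 0 ≤ z.2 → Summable (fun k : ℕ => q ^ k * blk (θ k) z) := by
    intro z hz
    refine Summable.of_nonneg_of_le (fun k => mul_nonneg (by positivity) (blk_nonneg _ z hz))
      (fun k => ?_) (hg.mul_right (|(z.1 : ℝ)| + 2 * z.2))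
    calc q ^ k * blk (θ k) z ≤ q ^ k * (θ k * (|(z.1 : ℝ)| + 2 * z.2)) :=
          mul_le_mul_of_nonneg_left (blk_le _ (hθ0 k) z hz) (by positivity)
      _ = _ := by rw [← mul_assoc, hqθ]
  refine ⟨fun z => (4 * q) * ∑' k, q ^ k * blk (θ k) z, ?_, ?_, ?_, ?_⟩
  · intro z hz
    exact mul_nonneg (by positivity)
      (tsum_nonneg fun k => mul_nonneg (by positivity) (blk_nonneg _ z hz))
  · intro z hz
    have s1 := hsum (z.1 + 1, z.2) (by simp only; omega)
    have s2 := hsum (z.1 - 1, z.2) (by simp only; omega)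
    have s3 := hsum (z.1, z.2 + 1) (by simp only; omega)
    have s4 := hsum (z.1, z.2 - 1) (by simp only; omega)
    have : ∀ k, q ^ k * blk (θ k) z = (q ^ k * blk (θ k) (z.1 + 1, z.2) +
        q ^ k * blk (θ k) (z.1 - 1, z.2) + q ^ k * blk (θ k) (z.1, z.2 + 1) +
        q ^ k * blk (θ k) (z.1, z.2 - 1)) / 4 := by
      intro k
      rw [← avg_blk]; unfold avg; ring
    simp only
    rw [tsum_congr this, tsum_div_const, ((s1.add s2).add s3).tsum_add s4,
      (s1.add s2).tsum_add s3, s1.tsum_add s2]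
    unfold avg
    ring
  · intro z hz
    simp only
    by_cases hz1 : z.1 = 0
    · rw [hz1]
      simp only [Int.cast_zero, abs_zero]
      rw [Real.zero_rpow h0.ne']
      exact mul_nonneg (by positivity)
        (tsum_nonneg fun k => mul_nonneg (by positivity) (blk_nonneg _ z hz))
    · have habs : (1 : ℝ) ≤ |(z.1 : ℝ)| := by exact_mod_cast Int.one_le_abs hz1
      obtain ⟨k, hk1, hk2⟩ := exists_nat_pow_near habs (by norm_num : (1:ℝ) < 2)
      have hp : (0:ℝ) < 2 ^ k := by positivity
      have hθk : θ k * |(z.1 : ℝ)| = |(z.1 : ℝ)| / 2 ^ k := by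
        simp only [hθ]; rw [one_div, inv_pow]; field_simp
      have hb : 1 / 4 ≤ blk (θ k) z := by
        apply blk_lower _ z hz _ _ (hθ0 k)
        · rw [hθk, le_div_iff₀ hp]; linarith
        · rw [hθk, div_le_iff₀ hp]; rw [pow_succ] at hk2; linarith
      have hle : q ^ k * blk (θ k) z ≤ ∑' k, q ^ k * blk (θ k) z :=
        (hsum z hz).le_tsum k (fun j _ => mul_nonneg (by positivity) (blk_nonneg _ z hz))
      have hpow : |(z.1 : ℝ)| ^ β ≤ q ^ (k + 1) := by
        calc |(z.1 : ℝ)| ^ β ≤ ((2:ℝ) ^ (k + 1)) ^ β :=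
              Real.rpow_le_rpow (abs_nonneg _) hk2.le h0.le
          _ = q ^ (k + 1) := by
              rw [hq, ← Real.rpow_natCast, ← Real.rpow_natCast, ← Real.rpow_mul (by norm_num),
                ← Real.rpow_mul (by norm_num), mul_comm]
      have h5 : q ^ k * (1 / 4) ≤ q ^ k * blk (θ k) z :=
        mul_le_mul_of_nonneg_left hb (by positivity)
      calc |(z.1 : ℝ)| ^ β ≤ q ^ (k + 1) := hpow
        _ = 4 * q * (q ^ k * (1 / 4)) := by ring
        _ ≤ _ := mul_le_mul_of_nonneg_left (h5.trans hle) (by positivity)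
  · intro c ε hε
    have hlim : Tendsto (fun j : ℕ => ∑' k : ℕ, q ^ k * blk (θ k) (c, (j : ℤ)) / j) atTop
        (nhds (∑' k : ℕ, (0 : ℝ))) := by
      refine tendsto_tsum_of_dominated_convergence (hg.mul_right (|(c : ℝ)| + 2)) ?_ ?_
      · intro k
        have : Tendsto (fun j : ℕ => (q ^ k * 2) / (j : ℝ)) atTop (nhds 0) :=
          tendsto_const_div_atTop_nhds_zero_nat _
        refine squeeze_zero (fun j => ?_) (fun j => ?_) this
        · exact div_nonneg (mul_nonneg (by positivity) (blk_nonneg _ _ (by simp))) (Nat.cast_nonneg _)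
        · exact div_le_div_of_nonneg_right (mul_le_mul_of_nonneg_left
            (blk_le_two _ _ (by simp)) (by positivity)) (Nat.cast_nonneg _)
      · filter_upwards [eventually_ge_atTop 1] with j hj k
        have hj' : (1 : ℝ) ≤ j := by exact_mod_cast hj
        rw [Real.norm_of_nonneg (div_nonneg (mul_nonneg (by positivity)
          (blk_nonneg _ _ (by simp))) (Nat.cast_nonneg _)), div_le_iff₀ (by linarith)]
        have hb := blk_le (θ k) (hθ0 k) (c, (j : ℤ)) (by simp)
        simp only [Int.cast_natCast] at hb
        have hc : |(c : ℝ)| ≤ |(c : ℝ)| * j := le_mul_of_one_le_right (abs_nonneg _) hj'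
        calc q ^ k * blk (θ k) (c, (j : ℤ)) ≤ q ^ k * (θ k * (|(c : ℝ)| + 2 * j)) :=
              mul_le_mul_of_nonneg_left hb (by positivity)
          _ ≤ q ^ k * (θ k * ((|(c : ℝ)| + 2) * j)) := by
              refine mul_le_mul_of_nonneg_left (mul_le_mul_of_nonneg_left ?_ (hθ0 k)) (by positivity)
              linarith
          _ = _ := by rw [← hqθ]; ring
    rw [tsum_zero] at hlim
    have hε' : 0 < ε / (4 * q) := by positivity
    filter_upwards [hlim.eventually_lt_const hε', eventually_ge_atTop 1] with j hj hj1
    have hj' : (0 : ℝ) < j := by exact_mod_cast hj1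
    rw [tsum_div_const, div_lt_iff₀ hj'] at hj
    calc 4 * q * ∑' k : ℕ, q ^ k * blk (θ k) (c, (j : ℤ)) ≤ 4 * q * (ε / (4 * q) * j) :=
          mul_le_mul_of_nonneg_left hj.le (by positivity)
      _ = ε * j := by field_simp

/-- **Theorem 2.** Let `B ⊂ ℍ` be nonempty and suppose there exists `α > 1` such that
`B \ {x ∈ ℍ : x₂ ≤ |x₁|^{1/α}}` is finite.  Then some `x ∈ B` has positive stationary
harmonic measure, i.e. `H_{B,N}(x)` converges as `N → ∞` to a positive limit. -/
theorem exists_harm_pos_of_subLinear (B : Set (ℤ × ℤ)) (hB : B ⊆ upperH) (hne : B.Nonempty)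
    (hfin : ∃ α : ℝ, 1 < α ∧
      (B \ {x ∈ upperH | (x.2 : ℝ) ≤ |(x.1 : ℝ)| ^ (1 / α)}).Finite) :
    ∃ x ∈ B, ∃ l : ℝ, 0 < l ∧ Tendsto (fun N : ℕ => harm B N x) atTop (nhds l) := by
  obtain ⟨α, hα, hF⟩ := hfin
  have hβ0 : 0 < 1 / α := by positivity
  have hβ1 : 1 / α < 1 := by rw [div_lt_one (by linarith)]; exact hα
  obtain ⟨v, hv0, hvavg, hvlow, hvo⟩ := exists_barrier (1 / α) hβ0 hβ1
  -- uniform height bound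
  obtain ⟨D, hD0, hD⟩ : ∃ D : ℝ, 0 ≤ D ∧ ∀ z ∈ B, (z.2 : ℝ) ≤ |(z.1 : ℝ)| ^ (1 / α) + D := by
    obtain ⟨D, hD⟩ := (hF.image (fun z : ℤ × ℤ => (z.2 : ℝ))).bddAbove
    refine ⟨max D 0, le_max_right _ _, fun z hz => ?_⟩
    by_cases h : (z.2 : ℝ) ≤ |(z.1 : ℝ)| ^ (1 / α)
    · linarith [le_max_right D 0]
    · have := hD ⟨z, ⟨hz, fun h' => h h'.2⟩, rfl⟩
      simp only at this
      have h2 : 0 ≤ |(z.1 : ℝ)| ^ (1 / α) := by positivity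
      linarith [le_max_left D 0]
  obtain ⟨⟨c, b2⟩, hb⟩ := hne
  obtain ⟨t, htB, htop⟩ := Int.exists_greatest_of_bdd (P := fun j => ((c, j) : ℤ × ℤ) ∈ B)
    ⟨⌈|(c : ℝ)| ^ (1 / α) + D⌉, fun j hj => by
      have h1 := hD _ hj
      have h2 := Int.le_ceil (|(c : ℝ)| ^ (1 / α) + D)
      exact_mod_cast h1.trans h2⟩ ⟨b2, hb⟩
  have ht0 : 0 ≤ t := hB htB
  set A := B ∪ lineH 0 with hAdef
  have hA : lineH 0 ⊆ A := Set.subset_union_right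
  -- choose the high point in the column
  obtain ⟨Y, hY1, hY2, hY3⟩ : ∃ Y : ℕ, v (c, Y) ≤ (1 / 8) * Y ∧ t < Y ∧ 8 * D < Y := by
    have h1 := hvo c (1 / 8) (by norm_num)
    have h2 : ∀ᶠ Y : ℕ in atTop, t < Y := by
      filter_upwards [eventually_gt_atTop t.toNat] with Y hY
      omega
    have h3 : ∀ᶠ Y : ℕ in atTop, 8 * D < Y :=
      (tendsto_natCast_atTop_atTop (R := ℝ)).eventually_gt_atTop (8 * D)
    obtain ⟨Y, a, b, c⟩ := (h1.and (h2.and h3)).exists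
    exact ⟨Y, a, b, c⟩
  have hlow : ∀ M : ℕ, Y ≤ M → 4 * ((Y : ℝ) / 4) ≤ tot A (c, (Y : ℤ)) M := by
    intro M hM
    have := tot_lower hA (y := (c, (Y : ℤ))) (by simp only; omega)
      (fun z => v z + D + (z.2 : ℝ) / 2) ?_ ?_ ?_ M (by simp only; omega)
    · simp only [Int.cast_natCast] at this
      linarith
    · rintro z (hz | hz)
      · have h1 := hD z hz
        have h2 := hvlow z (hB hz)
        have h3 : (0 : ℝ) ≤ z.2 := by exact_mod_cast hB hz
        linarith
      · have hz' : z.2 = 0 := hz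
        have := hv0 z (by omega)
        simp only [hz']; push_cast; linarith
    · intro z hz
      have := hv0 z hz
      linarith
    · intro z hz
      have := hvavg z hz
      have e : avg (fun z => v z + D + (z.2 : ℝ) / 2) z = avg v z + D + (z.2 : ℝ) / 2 := by
        unfold avg; push_cast; ring
      rw [e, this]
  have hfree : ∀ j, t < j → ((c, j) : ℤ × ℤ) ∉ A := by
    rintro j hj (h | h)
    · have := htop j h; omega
    · have : j = 0 := h
      omega
  obtain ⟨L, hL⟩ : ∃ L : ℕ, t + L = (Y : ℤ) := ⟨(Y - t).toNat, by omega⟩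
  have hp := kev_column c t hfree L
  rw [hL] at hp
  set p := kev A (c, t) L (c, (Y : ℤ)) with hpdef
  have hYpos : (0 : ℝ) < Y := by exact_mod_cast (by omega : 0 < Y)
  have hlow2 : ∀ M : ℕ, Y ≤ M → p * Y ≤ tot A (c, t) M := by
    intro M hM
    have h1 := tot_dom hA (x := (c, t)) (y := (c, (Y : ℤ))) ht0 (by simp) L (M : ℤ) (by omega)
    have h2 := hlow M hM
    have h3 : p * Y ≤ p * tot A (c, (Y : ℤ)) M := mul_le_mul_of_nonneg_left (by linarith) hp.le
    exact h3.trans h1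
  obtain ⟨l, hl⟩ := convex_bounded_tendsto (a := fun N : ℕ => tot A (c, t) N) t.toNat
    (4 * ((c, t) : ℤ × ℤ).2 + 1) (fun n => tot_nonneg _ _ _)
    (fun n => tot_le hA (x := (c, t)) ht0 n (by omega)) (fun n hn => by
      have := tot_convex hA (x := (c, t)) ht0 ((n : ℤ) + 1) (by simp only; omega)
      have e1 : (n : ℤ) + 1 + 1 = ((n + 2 : ℕ) : ℤ) := by push_cast; ring
      have e2 : (n : ℤ) + 1 - 1 = (n : ℤ) := by ring
      rw [e1, e2] at this
      exact_mod_cast this)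
  refine ⟨(c, t), htB, l, ?_, ?_⟩
  · have : p * Y ≤ l := ge_of_tendsto hl (by
      filter_upwards [eventually_ge_atTop Y] with M hM using hlow2 M hM)
    exact lt_of_lt_of_le (by positivity) this
  · refine hl.congr' ?_
    filter_upwards [eventually_gt_atTop t.toNat] with N hN
    exact (harm_eq_tot htB ht0 N (by simp only; omega)).symm

end SHM
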